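/- Let m₀ = 0 and T > 0, and consider the mean field game system: pairs (z,m) of differentiable functions [0,T] → ℝ with z′(t) = z(t)|z(t)|/2, m′(t) = −m(t)|z(t)| + z(t), z(T) = 2m(T), m(0) = 0. If T ≤ 1/2 the only solution is the identically-zero pair. If T > 1/2 there are exactly three distinct solutions: the identically-zero pair, and two pairs (z₊,m₊) and (z₋,m₋) satisfying m₊(t) = −m₋(t) > 0 for every t ∈ (0,T]. -/

import Mathlib

/-- A solution of the two-state mean field game system on `[0,T]` with initial
mean `m₀`: a pair `(z,m)` of functions differentiable on `[0,T]` with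
`z′ = z|z|/2`, `m′ = −m|z| + z`, `z(T) = 2m(T)`, `m(0) = m₀`. -/
def MFGSol (T m₀ : ℝ) (z m : ℝ → ℝ) : Prop :=
  (∀ t ∈ Set.Icc (0:ℝ) T,
    HasDerivWithinAt z (z t * |z t| / 2) (Set.Icc (0:ℝ) T) t) ∧
  (∀ t ∈ Set.Icc (0:ℝ) T,
    HasDerivWithinAt m (-(m t) * |z t| + z t) (Set.Icc (0:ℝ) T) t) ∧
  z T = 2 * m T ∧ m 0 = m₀

/-!
The costate equation does not involve `m`, and its field `x ↦ x|x|/2` is locally Lipschitz, so `z`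
is determined by its terminal value `a = z(T)`; run backwards in time it never blows up, and it is
given by an explicit formula for every real `a`. The equation for `m` is then linear, so `m` is
determined by `a` and `m₀`, and solutions correspond to the roots of the scalar equation
`2 m(T) = a`. For `m₀ = 0` and `w = 2 + |a|T` this equation reads
`a = 0` or `(w - T)² = T(T + 4)`, which leaves `a = 0` and `|a| = (T - 2 + √(T(T + 4))) / T`. The
latter number is positive exactly when `T > 1/2`.
-/

open Set

section ODEUniqueness

variable {E : Type*} [NormedAddCommGroup E] [NormedSpace ℝ E] {a b : ℝ} {f g : ℝ → E}

theorem eqOn_Icc_left_of_locallyLipschitz {v : E → E} (hv : LocallyLipschitz v)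
    (hf : ∀ t ∈ Icc a b, HasDerivWithinAt f (v (f t)) (Icc a b) t)
    (hg : ∀ t ∈ Icc a b, HasDerivWithinAt g (v (g t)) (Icc a b) t) (hb : f b = g b) :
    EqOn f g (Icc a b) := by
  have hfc : ContinuousOn f (Icc a b) := fun t ht ↦ (hf t ht).continuousWithinAt
  have hgc : ContinuousOn g (Icc a b) := fun t ht ↦ (hg t ht).continuousWithinAt
  obtain ⟨K, hK⟩ := hv.locallyLipschitzOn.exists_lipschitzOnWith_of_compact
    ((isCompact_Icc.image_of_continuousOn hfc).union (isCompact_Icc.image_of_continuousOn hgc))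
  exact ODE_solution_unique_of_mem_Icc_left (fun _ _ ↦ hK)
    hfc (fun t ht ↦ (hf t (Ioc_subset_Icc_self ht)).mono_of_mem_nhdsWithin
      (Icc_mem_nhdsLE_of_mem ht))
    (fun t ht ↦ Or.inl (mem_image_of_mem f (Ioc_subset_Icc_self ht)))
    hgc (fun t ht ↦ (hg t (Ioc_subset_Icc_self ht)).mono_of_mem_nhdsWithin
      (Icc_mem_nhdsLE_of_mem ht))
    (fun t ht ↦ Or.inr (mem_image_of_mem g (Ioc_subset_Icc_self ht))) hb

theorem eqOn_Icc_right_of_linear {A : ℝ → E →L[ℝ] E} {q : ℝ → E} (hA : ContinuousOn A (Icc a b))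
    (hf : ∀ t ∈ Icc a b, HasDerivWithinAt f (A t (f t) + q t) (Icc a b) t)
    (hg : ∀ t ∈ Icc a b, HasDerivWithinAt g (A t (g t) + q t) (Icc a b) t) (ha : f a = g a) :
    EqOn f g (Icc a b) := by
  obtain ⟨C, hC⟩ := isCompact_Icc.exists_bound_of_continuousOn hA
  have hLip : ∀ t ∈ Ico a b, LipschitzOnWith C.toNNReal (fun x ↦ A t x + q t) univ := by
    refine fun t ht ↦ LipschitzOnWith.of_dist_le_mul fun x _ y _ ↦ ?_
    rw [dist_add_right]
    refine ((A t).dist_le_opNorm x y).trans ?_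
    gcongr
    exact (hC t (Ico_subset_Icc_self ht)).trans (Real.le_coe_toNNReal C)
  exact ODE_solution_unique_of_mem_Icc_right hLip
    (fun t ht ↦ (hf t ht).continuousWithinAt)
    (fun t ht ↦ (hf t (Ico_subset_Icc_self ht)).mono_of_mem_nhdsWithin (Icc_mem_nhdsGE_of_mem ht))
    (fun _ _ ↦ mem_univ _) (fun t ht ↦ (hg t ht).continuousWithinAt)
    (fun t ht ↦ (hg t (Ico_subset_Icc_self ht)).mono_of_mem_nhdsWithin (Icc_mem_nhdsGE_of_mem ht))
    (fun _ _ ↦ mem_univ _) ha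

end ODEUniqueness

theorem locallyLipschitz_mul_abs_div_two : LocallyLipschitz fun x : ℝ ↦ x * |x| / 2 := by
  have hmul : ContDiff ℝ 1 fun p : ℝ × ℝ ↦ p.1 * p.2 / 2 := by fun_prop
  exact hmul.locallyLipschitz.comp
    (LocallyLipschitz.id.prodMk lipschitzWith_one_norm.locallyLipschitz)

namespace MFGSol

/-- The solution on `(-∞, T]` of the costate equation `z′ = z|z|/2` with terminal value
`z(T) = a`. -/
noncomputable def costate (T a t : ℝ) : ℝ := 2 * a / (2 + |a| * (T - t))

/-- The solution on `[0, T]` of the state equation `m′ = -m|z| + z`, `m(0) = m₀`, driven by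
`z = costate T a`. With `r = (2 + |a|(T - t)) / (2 + |a|T)` it is `m₀ r² + sign(a) (1 - r²)`; the
sign is eliminated by factoring `1 - r²`. -/
noncomputable def mean (T m₀ a t : ℝ) : ℝ :=
  (m₀ * (2 + |a| * (T - t)) ^ 2 + a * t * (4 + |a| * (2 * T - t))) / (2 + |a| * T) ^ 2

/-- The absolute value of the terminal costate of the nonzero solutions with `m₀ = 0`; there are
such solutions only when it is positive. -/
noncomputable def terminalCostate (T : ℝ) : ℝ := (T - 2 + √(T * (T + 4))) / T

variable {T m₀ a t : ℝ} {z m : ℝ → ℝ}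

theorem costate_denom_pos (a : ℝ) (ht : t ≤ T) : 0 < 2 + |a| * (T - t) := by
  have := mul_nonneg (abs_nonneg a) (sub_nonneg.2 ht)
  linarith

@[simp]
theorem costate_self (T a : ℝ) : costate T a T = a := by simp [costate]

@[simp]
theorem costate_zero (T : ℝ) : costate T 0 = fun _ ↦ 0 := by ext; simp [costate]

theorem abs_costate (a : ℝ) (ht : t ≤ T) : |costate T a t| = 2 * |a| / (2 + |a| * (T - t)) := by
  rw [costate, abs_div, abs_mul, abs_two, abs_of_pos (costate_denom_pos a ht)]

theorem hasDerivAt_costate (a : ℝ) (ht : t ≤ T) :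
    HasDerivAt (costate T a) (costate T a t * |costate T a t| / 2) t := by
  have hD := costate_denom_pos a ht
  have hlin : HasDerivAt (fun t ↦ 2 + |a| * (T - t)) (-|a|) t := by
    simpa using (((hasDerivAt_id t).const_sub T).const_mul |a|).const_add 2
  refine ((hasDerivAt_const t (2 * a)).fun_div hlin hD.ne').congr_deriv ?_
  rw [abs_costate a ht, costate]
  field_simp
  ring

theorem mean_initial (m₀ a : ℝ) (hT : 0 ≤ T) : mean T m₀ a 0 = m₀ := by
  have hN : 2 + |a| * T ≠ 0 := by positivity
  simp [mean, hN]

@[simp]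
theorem mean_zero_zero (T : ℝ) : mean T 0 0 = fun _ ↦ 0 := by ext; simp [mean]

theorem mean_neg_neg (T m₀ a t : ℝ) : mean T (-m₀) (-a) t = -mean T m₀ a t := by
  simp only [mean, abs_neg]
  ring

theorem mean_pos (hm₀ : 0 ≤ m₀) (ha : 0 < a) (ht : t ∈ Ioc 0 T) : 0 < mean T m₀ a t := by
  have hT : 0 < T := ht.1.trans_le ht.2
  have h₁ : 0 < t := ht.1
  have h₂ : 0 < 2 * T - t := by linarith [ht.2]
  unfold mean
  positivity

theorem hasDerivAt_mean (m₀ a : ℝ) (hT : 0 ≤ T) (ht : t ≤ T) :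
    HasDerivAt (mean T m₀ a) (-mean T m₀ a t * |costate T a t| + costate T a t) t := by
  have hD := costate_denom_pos a ht
  have hlin (c : ℝ) : HasDerivAt (fun t ↦ |a| * (c - t)) (-|a|) t := by
    simpa using ((hasDerivAt_id t).const_sub c).const_mul |a|
  have hnum := (((hlin T).const_add 2).fun_pow 2 |>.const_mul m₀).fun_add
    (((hasDerivAt_id' t).const_mul a).fun_mul ((hlin (2 * T)).const_add 4))
  refine (hnum.div_const ((2 + |a| * T) ^ 2)).congr_deriv ?_
  rw [abs_costate a ht, costate, mean]
  field_simp
  ring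

theorem of_two_mul_mean_eq_self (hT : 0 ≤ T) (ha : 2 * mean T m₀ a T = a) :
    MFGSol T m₀ (costate T a) (mean T m₀ a) :=
  ⟨fun _ ht ↦ (hasDerivAt_costate a ht.2).hasDerivWithinAt,
    fun _ ht ↦ (hasDerivAt_mean m₀ a hT ht.2).hasDerivWithinAt,
    by rw [costate_self, ha], mean_initial m₀ a hT⟩

theorem eqOn_costate (h : MFGSol T m₀ z m) : EqOn z (costate T (z T)) (Icc 0 T) :=
  eqOn_Icc_left_of_locallyLipschitz locallyLipschitz_mul_abs_div_two h.1
    (fun _ ht ↦ (hasDerivAt_costate (z T) ht.2).hasDerivWithinAt) (costate_self T (z T)).symm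

theorem eqOn_mean (h : MFGSol T m₀ z m) (hT : 0 ≤ T) : EqOn m (mean T m₀ (z T)) (Icc 0 T) := by
  have hz : ContinuousOn z (Icc 0 T) := fun t ht ↦ (h.1 t ht).continuousWithinAt
  refine eqOn_Icc_right_of_linear (A := fun t ↦ -|z t| • ContinuousLinearMap.id ℝ ℝ) (q := z)
    (hz.abs.neg.smul continuousOn_const) (fun t ht ↦ ?_) (fun t ht ↦ ?_)
    (h.2.2.2.trans (mean_initial m₀ (z T) hT).symm)
  · exact (h.2.1 t ht).congr_deriv (by simp [mul_comm])
  · refine (hasDerivAt_mean m₀ (z T) hT ht.2).hasDerivWithinAt.congr_deriv ?_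
    rw [← h.eqOn_costate ht]
    simp [mul_comm]

theorem two_mul_mean_terminal (h : MFGSol T m₀ z m) (hT : 0 ≤ T) :
    2 * mean T m₀ (z T) T = z T := by
  rw [← h.eqOn_mean hT (right_mem_Icc.2 hT), h.2.2.1]

theorem two_mul_mean_eq_self_iff (hT : 0 < T) :
    2 * mean T 0 a T = a ↔ a = 0 ∨ |a| = terminalCostate T := by
  set w := 2 + |a| * T with hw
  set s := √(T * (T + 4))
  have hs_sq : s ^ 2 = T * (T + 4) := Real.sq_sqrt (by positivity)
  have hTs : T < s := Real.lt_sqrt_of_sq_lt (by nlinarith)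
  have hw_pos : 0 < w := by positivity
  have hfactor_pos : 0 < w - T + s := by linarith
  calc 2 * mean T 0 a T = a
    _ ↔ a * ((w - T - s) * (w - T + s)) = 0 := by
      have hmean : mean T 0 a T = a * T * (w + 2) / w ^ 2 := by
        rw [mean, hw]
        ring
      rw [hmean, ← mul_div_assoc, div_eq_iff (by positivity)]
      constructor <;> intro h <;> linear_combination -h - a * hs_sq
    _ ↔ a = 0 ∨ w - T - s = 0 := by simp [hfactor_pos.ne']
    _ ↔ a = 0 ∨ |a| = terminalCostate T := by
      have hsub : w - T - s = |a| * T - (T - 2 + s) := by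
        rw [hw]
        ring
      rw [hsub, sub_eq_zero, terminalCostate, eq_div_iff hT.ne']

theorem terminalCostate_pos_iff (hT : 0 < T) : 0 < terminalCostate T ↔ 1 / 2 < T := by
  rw [terminalCostate, div_pos_iff_of_pos_right hT]
  constructor <;> intro h
  · by_contra! hle
    have hsq : (2 - T) ^ 2 < T * (T + 4) :=
      (Real.lt_sqrt (by linarith)).1 (by linarith)
    linarith
  · have := Real.lt_sqrt_of_sq_lt (x := 2 - T) (y := T * (T + 4)) (by linarith)
    linarith

theorem terminal_eq_zero_or_abs_eq (h : MFGSol T 0 z m) (hT : 0 < T) :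
    z T = 0 ∨ |z T| = terminalCostate T :=
  (two_mul_mean_eq_self_iff hT).1 (h.two_mul_mean_terminal hT.le)

theorem eqOn_zero (h : MFGSol T 0 z m) (hT : 0 ≤ T) (hz : z T = 0) :
    EqOn z (fun _ ↦ 0) (Icc 0 T) ∧ EqOn m (fun _ ↦ 0) (Icc 0 T) := by
  simpa [hz] using And.intro h.eqOn_costate (h.eqOn_mean hT)

theorem zero (hT : 0 ≤ T) : MFGSol T 0 (fun _ ↦ 0) fun _ ↦ 0 := by
  simpa using of_two_mul_mean_eq_self (m₀ := 0) (a := 0) hT (by simp)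

end MFGSol

/-- For `m₀ = 0` and `T > 0`: if `T ≤ 1/2` the only solution of the mean field
game system is the zero pair; if `T > 1/2` there are exactly three distinct
solutions: the zero pair, and two pairs `(z₊,m₊)`, `(z₋,m₋)` with
`m₊(t) = −m₋(t) > 0` for every `t ∈ (0,T]`. -/
theorem stmt_9 (T : ℝ) (hT : 0 < T) :
    (T ≤ 1/2 →
      MFGSol T 0 (fun _ => 0) (fun _ => 0) ∧
      ∀ z m : ℝ → ℝ, MFGSol T 0 z m →
        Set.EqOn z (fun _ => 0) (Set.Icc 0 T) ∧
        Set.EqOn m (fun _ => 0) (Set.Icc 0 T)) ∧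
    (1/2 < T →
      MFGSol T 0 (fun _ => 0) (fun _ => 0) ∧
      ∃ zp mp zm mm : ℝ → ℝ,
        MFGSol T 0 zp mp ∧ MFGSol T 0 zm mm ∧
        (∀ t ∈ Set.Ioc (0:ℝ) T, mp t = - mm t ∧ 0 < mp t) ∧
        (∀ z m : ℝ → ℝ, MFGSol T 0 z m →
          (Set.EqOn z (fun _ => 0) (Set.Icc 0 T) ∧
             Set.EqOn m (fun _ => 0) (Set.Icc 0 T)) ∨
          (Set.EqOn z zp (Set.Icc 0 T) ∧ Set.EqOn m mp (Set.Icc 0 T)) ∨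
          (Set.EqOn z zm (Set.Icc 0 T) ∧ Set.EqOn m mm (Set.Icc 0 T)))) := by
  refine ⟨fun hle ↦ ⟨.zero hT.le, fun z m h ↦ ?_⟩, fun hlt ↦ ⟨.zero hT.le, ?_⟩⟩
  · have hnonpos : MFGSol.terminalCostate T ≤ 0 :=
      not_lt.1 fun hpos ↦ hle.not_gt ((MFGSol.terminalCostate_pos_iff hT).1 hpos)
    refine h.eqOn_zero hT.le ((h.terminal_eq_zero_or_abs_eq hT).elim id fun habs ↦ ?_)
    exact abs_nonpos_iff.1 (habs.trans_le hnonpos)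
  · set a := MFGSol.terminalCostate T
    have ha_pos : 0 < a := (MFGSol.terminalCostate_pos_iff hT).2 hlt
    have hsol {b : ℝ} (hb : |b| = a) : MFGSol T 0 (MFGSol.costate T b) (MFGSol.mean T 0 b) :=
      .of_two_mul_mean_eq_self hT.le ((MFGSol.two_mul_mean_eq_self_iff hT).2 (.inr hb))
    refine ⟨_, _, _, _, hsol (b := a) (abs_of_pos ha_pos),
      hsol (b := -a) (by rw [abs_neg, abs_of_pos ha_pos]), fun t ht ↦ ⟨?_, ?_⟩, fun z m h ↦ ?_⟩
    · simpa using MFGSol.mean_neg_neg T 0 (-a) t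
    · exact MFGSol.mean_pos le_rfl ha_pos ht
    · have hz := h.eqOn_costate
      have hm := h.eqOn_mean hT.le
      rcases h.terminal_eq_zero_or_abs_eq hT with hzero | habs
      · exact .inl (h.eqOn_zero hT.le hzero)
      · rcases eq_or_eq_neg_of_abs_eq habs with hval | hval <;> rw [hval] at hz hm
        exacts [.inr (.inl ⟨hz, hm⟩), .inr (.inr ⟨hz, hm⟩)]
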